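/- Let 𝒯 be a ℤ/m-graded triangulated category (1 ≤ m ≤ ∞), R a commutative ring acting centrally on 𝒯, G an object, and M = Hom^•(G, G). Suppose r_1, …, r_n ∈ R is an M-regular sequence, and set s = 2^n. Then the Koszul object G⫽(r_1^s, …, r_n^s) does not belong to ⟨G⟩_n. -/

import Mathlib

open CategoryTheory Category Limits Pretriangulated DirectSum

universe v u

namespace RouquierDim

variable {C : Type u} [Category.{v} C] [Preadditive C] [HasZeroObject C]
  [HasShift C ℤ] [∀ n : ℤ, (shiftFunctor C n).Additive] [Pretriangulated C]
  [HasBinaryBiproducts C]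

/-- `Z` is a summand of `K`: there are maps `r : Z ⟶ K`, `k : K ⟶ Z` with `r ≫ k = 𝟙 Z`. -/
def IsSummand (Z K : C) : Prop := ∃ (r : Z ⟶ K) (k : K ⟶ Z), r ≫ k = 𝟙 Z

/-- The subcategory `ℐ * 𝒥`: objects `K` admitting a distinguished triangle
`K₀ ⟶ K ⟶ K₁ ⟶ K₀⟦1⟧` with `K₀ ∈ ℐ` and `K₁ ∈ 𝒥`. -/
def star (I J : Set C) : Set C :=
  {K | ∃ (K₀ K₁ : C) (f : K₀ ⟶ K) (g : K ⟶ K₁) (h : K₁ ⟶ K₀⟦(1 : ℤ)⟧),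
    Triangle.mk f g h ∈ (distTriang C) ∧ K₀ ∈ I ∧ K₁ ∈ J}

/-- Membership in `⟨ℐ⟩`, the smallest strictly full subcategory containing `ℐ` and
closed under finite direct sums, shifts, and summands. -/
inductive angleMem (I : Set C) : C → Prop
  | of {X : C} (hX : X ∈ I) : angleMem I X
  | zero {X : C} (hX : IsZero X) : angleMem I X
  | shift {X : C} (n : ℤ) (hX : angleMem I X) : angleMem I (X⟦n⟧)
  | sum {X Y : C} (hX : angleMem I X) (hY : angleMem I Y) : angleMem I (X ⊞ Y)
  | smd {X Y : C} (h : IsSummand X Y) (hY : angleMem I Y) : angleMem I X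
  | iso {X Y : C} (e : X ≅ Y) (hX : angleMem I X) : angleMem I Y

/-- `⟨ℐ⟩` as a set of objects. -/
def angle (I : Set C) : Set C := {X | angleMem I X}

/-- `⟨ℐ⟩_n` for `n ≥ 1`: `⟨ℐ⟩_1 = ⟨ℐ⟩`, `⟨ℐ⟩_{n+1} = ⟨⟨ℐ⟩_n * ⟨ℐ⟩⟩`. (Value `∅` at `n = 0`.) -/
def angleN (I : Set C) : ℕ → Set C
  | 0 => ∅
  | 1 => angle I
  | (n + 2) => angle (star (angleN I (n + 1)) (angle I))

/-- `G` is a split-generator of the triangulated category `C`: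
`C = ⟨G⟩_n` for some `n ∈ ℕ`. -/
def IsSplitGenerator (G : C) : Prop := ∃ n : ℕ, angleN {G} n = Set.univ

/-- A central action of a commutative ring `R` on the (`ℤ/m`-graded) triangulated
category `C`: a ring homomorphism `φ K : R →+* End K` for every object `K`, natural in `K`
and compatible with the shift. -/
structure CentralAction (R : Type*) [CommRing R] where
  φ : ∀ K : C, R →+* End K
  natural : ∀ {K L : C} (f : K ⟶ L) (r : R), φ K r ≫ f = f ≫ φ L r
  shift_comm : ∀ (K : C) (r : R) (n : ℤ), φ (K⟦n⟧) r = (φ K r)⟦n⟧'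

variable {R : Type*} [CommRing R]

/-- The `R`-module structure on `Hom(X, Y)` induced by a central action:
`r • f = f ≫ φ Y r` (equivalently, `φ X r ≫ f`, by naturality). -/
def CentralAction.homModule (A : CentralAction (C := C) R) (X Y : C) :
    Module R (X ⟶ Y) :=
  Module.compHom (X ⟶ Y) (A.φ Y)

/-- `Hom^•(X, Y) = ⊕_{i ∈ ℤ/m} Hom(X, Σ^i Y)` as an `R`-module, for the `ℤ/m`-graded
triangulated category `C` (`m = 0` encodes `m = ∞`, in which case `ℤ/m = ℤ`), packaged
as an object of `ModuleCat R`. -/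
noncomputable def CentralAction.HomBullet (A : CentralAction (C := C) R) (m : ℕ)
    (X Y : C) : ModuleCat R :=
  letI : ∀ i : ZMod m, Module R (X ⟶ Y⟦(ZMod.cast i : ℤ)⟧) := fun _ => A.homModule _ _
  ModuleCat.of R (⨁ i : ZMod m, (X ⟶ Y⟦(ZMod.cast i : ℤ)⟧))

/-- `K` is a Koszul object `X ⫽ r` of `r : R` on `X`: there is a distinguished triangle
`X ⟶ X ⟶ K ⟶ X⟦1⟧` whose first map is `φ X r`. -/
def CentralAction.IsKoszulObject (A : CentralAction (C := C) R) (r : R) (X K : C) : Prop :=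
  ∃ (g : X ⟶ K) (h : K ⟶ X⟦(1 : ℤ)⟧),
    Triangle.mk (A.φ X r : X ⟶ X) g h ∈ (distTriang C)

/-- `K` is an iterated Koszul object `X ⫽ (r_1, …, r_n)`:
`X ⫽ (r_1, …, r_n) = (X ⫽ r_1) ⫽ (r_2, …, r_n)` (equivalently,
`X ⫽ (r_1, …, r_n) = (X ⫽ (r_1, …, r_{n-1})) ⫽ r_n`). -/
inductive CentralAction.IsIterKoszulObject (A : CentralAction (C := C) R) :
    C → List R → C → Prop
  | nil (X : C) : CentralAction.IsIterKoszulObject A X [] X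
  | cons {X Y K : C} {r : R} {rs : List R} (h₁ : A.IsKoszulObject r X Y)
      (h₂ : CentralAction.IsIterKoszulObject A Y rs K) :
      CentralAction.IsIterKoszulObject A X (r :: rs) K

section ModuleLemmas
open RingTheory.Sequence
open scoped Pointwise

variable {R : Type*} [CommRing R]

theorem mem_smul_top' {M : Type*} [AddCommGroup M] [Module R M] (r : R) (x : M) :
    x ∈ (r • ⊤ : Submodule R M) ↔ ∃ y, r • y = x := by
  rw [Submodule.mem_smul_pointwise_iff_exists]
  simp

theorem isSMulRegular_iff' {M : Type*} [AddCommGroup M] [Module R M] (r : R) :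
    IsSMulRegular M r ↔ ∀ x : M, r • x = 0 → x = 0 :=
  isSMulRegular_iff_right_eq_zero_of_smul

theorem quot_mk_eq_zero' {M : Type*} [AddCommGroup M] [Module R M] (r : R) (x : M) :
    (Submodule.Quotient.mk x : QuotSMulTop r M) = 0 ↔ ∃ y, r • y = x := by
  rw [Submodule.Quotient.mk_eq_zero, mem_smul_top']

/-- extension-closedness of weak regularity -/
theorem wreg_middle (rs : List R) : ∀ {M₁ M₂ M₃ : Type _} [AddCommGroup M₁] [AddCommGroup M₂]
    [AddCommGroup M₃] [Module R M₁] [Module R M₂] [Module R M₃]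
    (f : M₁ →ₗ[R] M₂) (g : M₂ →ₗ[R] M₃) (_ : Function.Injective f)
    (_ : Function.Exact f g) (_ : Function.Surjective g)
    (_ : IsWeaklyRegular M₁ rs) (_ : IsWeaklyRegular M₃ rs), IsWeaklyRegular M₂ rs := by
  induction rs with
  | nil => intros; simp
  | cons r rs ih =>
    intro M₁ M₂ M₃ _ _ _ _ _ _ f g hf hfg hg h₁ h₃
    rw [isWeaklyRegular_cons_iff] at h₁ h₃ ⊢
    obtain ⟨h₁, h₁'⟩ := h₁
    obtain ⟨h₃, h₃'⟩ := h₃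
    rw [isSMulRegular_iff'] at h₁ h₃ ⊢
    refine ⟨?_, ih (QuotSMulTop.map r f) (QuotSMulTop.map r g) ?_
      (QuotSMulTop.map_exact r hfg hg) (QuotSMulTop.map_surjective r hg) h₁' h₃'⟩
    · intro x hx
      have h0 : g x = 0 := h₃ _ (by rw [← map_smul, hx, map_zero])
      obtain ⟨y, rfl⟩ := (hfg x).1 h0
      rw [← map_smul] at hx
      have := h₁ y (hf (by rw [hx, map_zero]))
      rw [this, map_zero]
    · rw [injective_iff_map_eq_zero]
      intro a
      induction a using Submodule.Quotient.induction_on with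
      | H x =>
      intro hx
      rw [QuotSMulTop.map_apply_mk, quot_mk_eq_zero'] at hx
      obtain ⟨y, hy⟩ := hx
      have h0 : g y = 0 := h₃ _ (by rw [← map_smul, hy]; exact (hfg _).2 ⟨x, rfl⟩)
      obtain ⟨z, rfl⟩ := (hfg y).1 h0
      rw [quot_mk_eq_zero']
      exact ⟨z, hf (by rw [map_smul, hy])⟩

theorem wreg_retract (rs : List R) : ∀ {M N : Type _} [AddCommGroup M] [AddCommGroup N]
    [Module R M] [Module R N] (f : N →ₗ[R] M) (g : M →ₗ[R] N) (_ : g ∘ₗ f = LinearMap.id)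
    (_ : IsWeaklyRegular M rs), IsWeaklyRegular N rs := by
  induction rs with
  | nil => intros; simp
  | cons r rs ih =>
    intro M N _ _ _ _ f g hfg h
    rw [isWeaklyRegular_cons_iff] at h ⊢
    refine ⟨?_, ih (QuotSMulTop.map r f) (QuotSMulTop.map r g) ?_ h.2⟩
    · have h1 := h.1
      rw [isSMulRegular_iff'] at h1 ⊢
      intro x hx
      have := h1 (f x) (by rw [← map_smul, hx, map_zero])
      have h2 : g (f x) = x := LinearMap.congr_fun hfg x
      rw [← h2, this, map_zero]
    · rw [← QuotSMulTop.map_comp, hfg, QuotSMulTop.map_id]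

theorem wreg_quot_pow {M : Type*} [AddCommGroup M] [Module R M] (r : R) (rs : List R)
    (hr : IsSMulRegular M r) (h : IsWeaklyRegular (QuotSMulTop r M) rs) (k : ℕ) :
    IsWeaklyRegular (QuotSMulTop (r ^ (k + 1)) M) rs := by
  induction k with
  | zero => exact (show r = r ^ (0 + 1) by simp) ▸ h
  | succ k ih =>
    rw [isSMulRegular_iff'] at hr
    let f : QuotSMulTop (r ^ (k + 1)) M →ₗ[R] QuotSMulTop (r ^ (k + 2)) M :=
      Submodule.mapQ _ _ (LinearMap.lsmul R M r) (by
        intro x hx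
        rw [mem_smul_top'] at hx
        obtain ⟨y, rfl⟩ := hx
        rw [Submodule.mem_comap, mem_smul_top']
        exact ⟨y, by simp [smul_smul, pow_succ, mul_comm]⟩)
    let g : QuotSMulTop (r ^ (k + 2)) M →ₗ[R] QuotSMulTop r M :=
      Submodule.mapQ _ _ LinearMap.id (by
        intro x hx
        rw [mem_smul_top'] at hx
        obtain ⟨y, rfl⟩ := hx
        rw [Submodule.mem_comap, mem_smul_top']
        exact ⟨r ^ (k + 1) • y, by simp [smul_smul, pow_succ, mul_comm]⟩)
    have hf : ∀ x : M, f (Submodule.Quotient.mk x) = Submodule.Quotient.mk (r • x) := fun x => rfl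
    have hg : ∀ x : M, g (Submodule.Quotient.mk x) = Submodule.Quotient.mk x := fun x => rfl
    refine wreg_middle rs f g ?_ ?_ ?_ ih h
    · rw [injective_iff_map_eq_zero]
      intro a
      induction a using Submodule.Quotient.induction_on with
      | H x =>
      rw [hf, quot_mk_eq_zero', quot_mk_eq_zero']
      rintro ⟨y, hy⟩
      refine ⟨y, ?_⟩
      rw [← sub_eq_zero]
      apply hr
      rw [smul_sub, ← hy, smul_smul, sub_eq_zero]
      congr 1; ring
    · intro a
      induction a using Submodule.Quotient.induction_on with
      | H x =>
      rw [hg, quot_mk_eq_zero']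
      constructor
      · rintro ⟨y, rfl⟩
        exact ⟨Submodule.Quotient.mk y, hf y⟩
      · rintro ⟨b, hb⟩
        induction b using Submodule.Quotient.induction_on with
        | H z =>
        rw [hf, ← sub_eq_zero, ← Submodule.Quotient.mk_sub, quot_mk_eq_zero'] at hb
        obtain ⟨y, hy⟩ := hb
        refine ⟨z - r ^ (k + 1) • y, ?_⟩
        have : x = r • z - r ^ (k + 2) • y := by rw [hy]; abel
        rw [this, smul_sub, smul_smul]
        congr 2; ring
    · intro a
      induction a using Submodule.Quotient.induction_on with
      | H x => exact ⟨Submodule.Quotient.mk x, rfl⟩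

theorem wreg_pow (s : ℕ) (rs : List R) : ∀ {M : Type _} [AddCommGroup M] [Module R M]
    (_ : IsWeaklyRegular M rs), IsWeaklyRegular M (rs.map fun r => r ^ (s + 1)) := by
  induction rs with
  | nil => intros; simp
  | cons r rs ih =>
    intro M _ _ h
    rw [isWeaklyRegular_cons_iff] at h
    rw [List.map_cons, isWeaklyRegular_cons_iff]
    exact ⟨h.1.pow _, ih (wreg_quot_pow r rs h.1 h.2 s)⟩

theorem ofList_pow_le (s : ℕ) (rs : List R) :
    Ideal.ofList (rs.map fun r => r ^ (s + 1)) ≤ Ideal.ofList rs := by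
  refine Ideal.span_le.2 ?_
  intro x hx
  obtain ⟨r, hr, rfl⟩ := List.mem_map.1 hx
  rw [SetLike.mem_coe, pow_succ]
  exact Ideal.mul_mem_left _ _ (Ideal.subset_span hr)

/-- transport along a surjection with kernel `r M`. -/
theorem wreg_of_surj {M N : Type*} [AddCommGroup M] [AddCommGroup N] [Module R M] [Module R N]
    (r : R) (rs : List R) (f : M →ₗ[R] N) (hf : Function.Surjective f)
    (hk : ∀ x, f x = 0 ↔ ∃ y, r • y = x) (h : IsWeaklyRegular M (r :: rs)) :
    IsWeaklyRegular N rs := by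
  rw [isWeaklyRegular_cons_iff] at h
  have hker : (r • ⊤ : Submodule R M) = LinearMap.ker f := by
    ext x; rw [mem_smul_top', LinearMap.mem_ker, hk]
  let e : QuotSMulTop r M ≃ₗ[R] N :=
    (Submodule.quotEquivOfEq _ _ hker).trans (f.quotKerEquivOfSurjective hf)
  exact (e.isWeaklyRegular_congr rs).1 h.2

theorem mem_of_surj {M N : Type*} [AddCommGroup M] [AddCommGroup N] [Module R M] [Module R N]
    (r : R) (rs : List R) (f : M →ₗ[R] N) (hf : Function.Surjective f)
    (hk : ∀ x, f x = 0 → ∃ y, r • y = x) (x : M)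
    (hx : f x ∈ (Ideal.ofList rs • ⊤ : Submodule R N)) :
    x ∈ (Ideal.ofList (r :: rs) • ⊤ : Submodule R M) := by
  have : (Ideal.ofList rs • ⊤ : Submodule R N) = (Ideal.ofList rs • ⊤ : Submodule R M).map f := by
    rw [Submodule.map_smul'', Submodule.map_top, LinearMap.range_eq_top.2 hf]
  rw [this] at hx
  obtain ⟨y, hy, hxy⟩ := hx
  obtain ⟨z, hz⟩ := hk (x - y) (by rw [map_sub, hxy, sub_self])
  have : x = r • z + y := by rw [hz]; abel
  rw [this, Ideal.ofList_cons_smul]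
  exact Submodule.add_mem_sup ((mem_smul_top' _ _).2 ⟨z, rfl⟩) hy

end ModuleLemmas

section CatLemmas
set_option linter.unusedSectionVars false
open RingTheory.Sequence

/-- the action as a morphism -/
def act (A : CentralAction (C := C) R) (X : C) (r : R) : X ⟶ X := A.φ X r

theorem act_natural (A : CentralAction (C := C) R) {X Y : C} (f : X ⟶ Y) (r : R) :
    act A X r ≫ f = f ≫ act A Y r := A.natural f r

theorem act_shift (A : CentralAction (C := C) R) (X : C) (r : R) (n : ℤ) :
    act A (X⟦n⟧) r = (act A X r)⟦n⟧' := A.shift_comm X r n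

theorem aux_post (A : CentralAction (C := C) R) {W X Y : C} (f : W ⟶ X) (a : X ⟶ Y) (r : R) :
    (f ≫ act A X r) ≫ a = (f ≫ a) ≫ act A Y r := by
  rw [Category.assoc, Category.assoc, act_natural]

theorem aux_shift (A : CentralAction (C := C) R) {X Y : C} (f : X ⟶ Y) (r : R) (n : ℤ) :
    (f ≫ act A Y r)⟦n⟧' = f⟦n⟧' ≫ act A (Y⟦n⟧) r := by
  rw [Functor.map_comp, act_shift]

theorem aux_iso {X X' Y Y' : C} (e : X ≅ X') (e' : Y ≅ Y') (f : X' ⟶ Y') :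
    (e.inv ≫ ((e.hom ≫ f) ≫ e'.inv)) ≫ e'.hom = f := by simp

/-- type synonym for homs carrying the module structure -/
def HomMod (_A : CentralAction (C := C) R) (X Y : C) : Type v := X ⟶ Y

instance (A : CentralAction (C := C) R) (X Y : C) : AddCommGroup (HomMod A X Y) :=
  inferInstanceAs (AddCommGroup (X ⟶ Y))

instance (A : CentralAction (C := C) R) (X Y : C) : Module R (HomMod A X Y) :=
  A.homModule X Y

theorem HomMod.smul_def (A : CentralAction (C := C) R) {X Y : C} (r : R) (f : HomMod A X Y) :
    (r • f : HomMod A X Y) = ((f : X ⟶ Y) ≫ act A Y r : X ⟶ Y) := rfl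

theorem HomMod.smul_def' (A : CentralAction (C := C) R) {X Y : C} (r : R) (f : HomMod A X Y) :
    (r • f : HomMod A X Y) = (act A X r ≫ (f : X ⟶ Y) : X ⟶ Y) :=
  (A.natural (f : X ⟶ Y) r).symm

def preL (A : CentralAction (C := C) R) {X Y : C} (a : X ⟶ Y) (Z : C) :
    HomMod A Y Z →ₗ[R] HomMod A X Z where
  toFun f := (a ≫ (f : Y ⟶ Z) : X ⟶ Z)
  map_add' f g := Preadditive.comp_add _ _ _ a (f : Y ⟶ Z) (g : Y ⟶ Z)
  map_smul' r f := (Category.assoc a (f : Y ⟶ Z) _).symm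

def postL (A : CentralAction (C := C) R) {X Y : C} (a : X ⟶ Y) (W : C) :
    HomMod A W X →ₗ[R] HomMod A W Y where
  toFun f := ((f : W ⟶ X) ≫ a : W ⟶ Y)
  map_add' f g := Preadditive.add_comp _ _ _ (f : W ⟶ X) (g : W ⟶ X) a
  map_smul' r f := by
    exact aux_post A f a r

def shiftL (A : CentralAction (C := C) R) (X Y : C) (n : ℤ) :
    HomMod A X Y →ₗ[R] HomMod A (X⟦n⟧) (Y⟦n⟧) where
  toFun f := ((f : X ⟶ Y)⟦n⟧' : X⟦n⟧ ⟶ Y⟦n⟧)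
  map_add' f g := Functor.map_add (shiftFunctor C n) (f := (f : X ⟶ Y)) (g := (g : X ⟶ Y))
  map_smul' r f := by
    exact aux_shift A f r n

theorem shiftL_bij (A : CentralAction (C := C) R) (X Y : C) (n : ℤ) :
    Function.Bijective (shiftL A X Y n) :=
  (Functor.FullyFaithful.ofFullyFaithful (shiftFunctor C n)).map_bijective X Y

theorem wreg_shift (A : CentralAction (C := C) R) (X Y : C) (n : ℤ) (rs : List R) :
    IsWeaklyRegular (HomMod A X Y) rs ↔ IsWeaklyRegular (HomMod A (X⟦n⟧) (Y⟦n⟧)) rs :=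
  (LinearEquiv.ofBijective (shiftL A X Y n) (shiftL_bij A X Y n)).isWeaklyRegular_congr rs

theorem wreg_iso (A : CentralAction (C := C) R) {X X' Y Y' : C} (e : X ≅ X') (e' : Y ≅ Y')
    (rs : List R) (h : IsWeaklyRegular (HomMod A X Y) rs) :
    IsWeaklyRegular (HomMod A X' Y') rs := by
  refine wreg_retract rs ((postL A e'.inv X).comp (preL A e.hom Y'))
    ((postL A e'.hom X').comp (preL A e.inv Y)) ?_ h
  refine LinearMap.ext fun f => ?_
  exact aux_iso e e' f

/-- shifts of `G` -/
def PG (G W : C) : Prop := ∃ j : ℤ, Nonempty (W ≅ G⟦j⟧)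

theorem PG.shift {G W : C} (h : PG G W) (n : ℤ) : PG G (W⟦n⟧) := by
  obtain ⟨j, ⟨e⟩⟩ := h
  exact ⟨j + n, ⟨(shiftFunctor C n).mapIso e ≪≫ ((shiftFunctorAdd C j n).app G).symm⟩⟩

def Ghost (G : C) {X Y : C} (g : X ⟶ Y) : Prop := ∀ W, PG G W → ∀ u : W ⟶ X, u ≫ g = 0

def GhostN (G : C) : ℕ → ∀ {X Y : C}, (X ⟶ Y) → Prop
  | 0, _, _, _ => True
  | (n + 1), X, Y, f => ∃ (Z : C) (a : X ⟶ Z) (b : Z ⟶ Y), GhostN G n a ∧ Ghost G b ∧ f = a ≫ b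

theorem Ghost.precomp {G X Y Z : C} {g : Y ⟶ Z} (h : Ghost G g) (a : X ⟶ Y) :
    Ghost G (a ≫ g) := fun W hW u => by
  rw [← Category.assoc]; exact h W hW _

theorem Ghost.postcomp {G X Y Z : C} {g : X ⟶ Y} (h : Ghost G g) (a : Y ⟶ Z) :
    Ghost G (g ≫ a) := fun W hW u => by
  rw [← Category.assoc, h W hW, zero_comp]

theorem Ghost.shift {G X Y : C} {g : X ⟶ Y} (h : Ghost G g) (n : ℤ) : Ghost G (g⟦n⟧') := by
  intro W hW u
  apply (shiftFunctor C (-n)).map_injective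
  rw [Functor.map_comp, Functor.map_zero,
    ← cancel_mono (shiftShiftNeg Y n).hom, zero_comp, Category.assoc]
  have : (g⟦n⟧')⟦-n⟧' ≫ (shiftShiftNeg Y n).hom = (shiftShiftNeg X n).hom ≫ g :=
    (shiftFunctorCompIsoId C n (-n) (add_neg_cancel n)).hom.naturality g
  rw [this, ← Category.assoc]
  exact h _ (hW.shift _) _

theorem GhostN.precomp {G : C} {n : ℕ} : ∀ {X Y Z : C} {g : Y ⟶ Z} (_ : GhostN G n g)
    (a : X ⟶ Y), GhostN G n (a ≫ g) := by
  induction n with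
  | zero => intros; trivial
  | succ n ih =>
    rintro X Y Z g ⟨V, b, c, hb, hc, rfl⟩ a
    exact ⟨V, a ≫ b, c, ih hb a, hc, by rw [Category.assoc]⟩

theorem GhostN.shift {G : C} {n : ℕ} (i : ℤ) : ∀ {X Y : C} {g : X ⟶ Y} (_ : GhostN G n g),
    GhostN G n (g⟦i⟧') := by
  induction n with
  | zero => intros; trivial
  | succ n ih =>
    rintro X Y g ⟨V, b, c, hb, hc, rfl⟩
    exact ⟨V⟦i⟧, b⟦i⟧', c⟦i⟧', ih hb, hc.shift i, by rw [Functor.map_comp]⟩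

theorem GhostN.cons {G : C} {n : ℕ} : ∀ {X Y Z : C} {g : X ⟶ Y} {f : Y ⟶ Z} (_ : Ghost G g)
    (_ : GhostN G n f), GhostN G (n + 1) (g ≫ f) := by
  induction n with
  | zero =>
    intro X Y Z g f hg _
    exact ⟨X, 𝟙 X, g ≫ f, trivial, hg.postcomp f, by simp⟩
  | succ n ih =>
    rintro X Y Z g _ hg ⟨V, b, c, hb, hc, rfl⟩
    exact ⟨V, g ≫ b, c, ih hg hb, hc, by rw [Category.assoc]⟩

/-- objects out of which all `n`-fold ghosts vanish -/
def Kill (G : C) (n : ℕ) : Set C := {X | ∀ (Y : C) (f : X ⟶ Y), GhostN G n f → f = 0}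

theorem kill_angle {G : C} {n : ℕ} {I : Set C} (hI : I ⊆ Kill G n) : angle I ⊆ Kill G n := by
  have smd : ∀ {X Y : C}, IsSummand X Y → Y ∈ Kill G n → X ∈ Kill G n := by
    rintro X Y ⟨r, k, hrk⟩ hY Z f hf
    rw [← Category.id_comp f, ← hrk, Category.assoc, hY _ _ (hf.precomp k), comp_zero]
  intro X hX
  induction hX with
  | of hX => exact hI hX
  | zero hX => intro Y f _; exact hX.eq_of_src _ _
  | @shift X i hX ih =>
    intro Y f hf
    apply (shiftFunctor C (-i)).map_injective
    rw [Functor.map_zero, ← cancel_epi (shiftShiftNeg X i).inv, comp_zero]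
    exact ih _ _ ((hf.shift (-i)).precomp _)
  | sum hX hY ih₁ ih₂ =>
    intro Z f hf
    apply biprod.hom_ext'
    · rw [ih₁ _ _ (hf.precomp _), comp_zero]
    · rw [ih₂ _ _ (hf.precomp _), comp_zero]
  | smd h hY ih => exact smd h ih
  | iso e hX ih => exact smd ⟨e.inv, e.hom, e.inv_hom_id⟩ ih

theorem kill_star {G : C} {n : ℕ} {I J : Set C} (hI : I ⊆ Kill G n) (hJ : J ⊆ Kill G 1) :
    star I J ⊆ Kill G (n + 1) := by
  rintro K ⟨K₀, K₁, f, g, h, hT, h₀, h₁⟩ Y _ ⟨Z, a, b, ha, hb, rfl⟩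
  have h2 : f ≫ a = 0 := hI h₀ _ _ (ha.precomp f)
  obtain ⟨c, hc'⟩ : ∃ c : K₁ ⟶ Z, a = g ≫ c := Triangle.yoneda_exact₂ _ hT a h2
  have h3 : c ≫ b = 0 := hJ h₁ _ _ ⟨_, c, b, trivial, hb, rfl⟩
  rw [hc', Category.assoc, h3, comp_zero]

theorem kill_G (G : C) : ({G} : Set C) ⊆ Kill G 1 := by
  rintro _ rfl Y _ ⟨Z, a, b, _, hb, rfl⟩
  exact hb _ ⟨0, ⟨((shiftFunctorZero C ℤ).app _).symm⟩⟩ a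

theorem kill_angleN (G : C) : ∀ n, angleN {G} n ⊆ Kill G n
  | 0 => fun _ h => h.elim
  | 1 => kill_angle (kill_G G)
  | (n + 2) => kill_angle (kill_star (kill_angleN G (n + 1)) (kill_angle (kill_G G)))

theorem neg_shift_iso (Z : C) : Nonempty ((Z⟦(-1 : ℤ)⟧)⟦(1 : ℤ)⟧ ≅ Z) :=
  ⟨shiftNegShift Z (1 : ℤ)⟩

/-- the main induction -/
theorem main_ind (A : CentralAction (C := C) R) (G : C) {rs : List R} {X K : C}
    (hK : A.IsIterKoszulObject X rs K) :
    ∀ (k : ℕ) (Z : C) (f : X ⟶ Z), PG G Z → GhostN G k f →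
    (∀ W, PG G W → IsWeaklyRegular (HomMod A W X) rs) →
    (∀ W, PG G W → IsWeaklyRegular (HomMod A X W) rs) →
    ((f : HomMod A X Z) ∉ (Ideal.ofList rs • ⊤ : Submodule R (HomMod A X Z))) →
    ∃ (Z' : C) (p : K ⟶ Z'), GhostN G (k + rs.length) p ∧ p ≠ 0 := by
  induction hK with
  | nil X =>
    intro k Z f _ hf _ _ hn
    refine ⟨Z, f, hf, ?_⟩
    rintro rfl
    exact hn (Submodule.zero_mem _)
  | @cons X Y K r rs h₁ h₂ ih =>
    intro k Z f hZ hf hW hX hn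
    obtain ⟨g, h, hT⟩ := h₁
    -- vanishing
    have c12 : act A X r ≫ g = 0 := comp_distTriang_mor_zero₁₂ _ hT
    have c23 : g ≫ h = 0 := comp_distTriang_mor_zero₂₃ _ hT
    have c31 : h ≫ act A X r⟦(1 : ℤ)⟧' = 0 := comp_distTriang_mor_zero₃₁ _ hT
    have regW : ∀ W, PG G W → ∀ u : W ⟶ X⟦(1 : ℤ)⟧,
        u ≫ act A X r⟦(1 : ℤ)⟧' = 0 → u = 0 := by
      intro W hPW u hu
      have h0 : IsWeaklyRegular (HomMod A W (X⟦(1 : ℤ)⟧)) (r :: rs) :=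
        wreg_iso A (neg_shift_iso W).some (Iso.refl _) _
          ((wreg_shift A _ _ 1 _).1 (hW _ (hPW.shift (-1))))
      rw [isWeaklyRegular_cons_iff] at h0
      rw [← act_shift] at hu
      exact (isSMulRegular_iff' r).1 h0.1 u hu
    have hgh : Ghost G h := by
      intro W hPW u
      apply regW W hPW
      rw [Category.assoc, c31, comp_zero]
    have key : ∀ V, PG G V → Function.Surjective
        ((preL A h (V⟦(1 : ℤ)⟧)).comp (shiftL A X V 1)) ∧
        ∀ x, ((preL A h (V⟦(1 : ℤ)⟧)).comp (shiftL A X V 1)) x = 0 ↔ ∃ y, r • y = x := by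
      intro V hV
      constructor
      · intro u
        have h0 : IsWeaklyRegular (HomMod A X (V⟦(1 : ℤ)⟧)) (r :: rs) := hX _ (hV.shift 1)
        rw [isWeaklyRegular_cons_iff] at h0
        have h4 : ∀ u : Y ⟶ V⟦(1 : ℤ)⟧, act A X r ≫ g ≫ u = 0 := fun u => by
          rw [← Category.assoc, c12, zero_comp]
        have h3 : g ≫ (u : Y ⟶ V⟦(1 : ℤ)⟧) = 0 := by
          refine (isSMulRegular_iff' r).1 h0.1 _ ?_
          exact (HomMod.smul_def' A r _).trans (h4 u)
        obtain ⟨w, hw⟩ := Triangle.yoneda_exact₃ _ hT (u : Y ⟶ V⟦(1 : ℤ)⟧) h3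
        obtain ⟨x, rfl⟩ := (shiftL_bij A X V 1).2 w
        exact ⟨x, hw.symm⟩
      · intro x
        constructor
        · intro hx
          have hx' : h ≫ (x : X ⟶ V)⟦(1 : ℤ)⟧' = 0 := hx
          obtain ⟨w, hw⟩ : ∃ w : X⟦(1 : ℤ)⟧ ⟶ V⟦(1 : ℤ)⟧,
              (x : X ⟶ V)⟦(1 : ℤ)⟧' = (-(act A X r)⟦(1 : ℤ)⟧') ≫ w :=
            Triangle.yoneda_exact₂ _
              (rot_of_distTriang _ (rot_of_distTriang _ hT)) ((x : X ⟶ V)⟦(1 : ℤ)⟧') hx'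
          obtain ⟨y, hy⟩ : ∃ y : X ⟶ V, y⟦(1 : ℤ)⟧' = w := (shiftL_bij A X V 1).2 w
          have h5 : (act A X r ≫ (-y))⟦(1 : ℤ)⟧' = (-(act A X r)⟦(1 : ℤ)⟧') ≫ w := by
            rw [Functor.map_comp, Functor.map_neg, hy, Preadditive.comp_neg, Preadditive.neg_comp]
          refine ⟨(-y : X ⟶ V), ?_⟩
          refine (HomMod.smul_def' A r _).trans ?_
          exact (shiftFunctor C (1 : ℤ)).map_injective (h5.trans hw.symm)
        · rintro ⟨y, rfl⟩
          have h5 : ∀ y : X ⟶ V, h ≫ (act A X r ≫ y)⟦(1 : ℤ)⟧' = 0 := fun y => by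
            rw [Functor.map_comp, ← Category.assoc, c31, zero_comp]
          rw [HomMod.smul_def']
          exact h5 y
    refine Exists.elim (ih (k + 1) (Z⟦(1 : ℤ)⟧) (h ≫ f⟦(1 : ℤ)⟧') (hZ.shift 1)
      (GhostN.cons hgh (hf.shift 1)) ?_ ?_ ?_) ?_
    rotate_right 1
    · rintro Z' ⟨p, hp, hp0⟩
      exact ⟨Z', p, by rw [List.length_cons, ← Nat.add_assoc, Nat.add_right_comm]; exact hp, hp0⟩
    · intro W hPW
      refine wreg_of_surj r rs (postL A g W) ?_ ?_ (hW W hPW)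
      · intro u
        have h3 : (u : W ⟶ Y) ≫ h = 0 := hgh W hPW u
        obtain ⟨w, hw⟩ := Triangle.coyoneda_exact₃ _ hT (u : W ⟶ Y) h3
        exact ⟨w, hw.symm⟩
      · intro x
        constructor
        · intro hx
          obtain ⟨w, hw⟩ := Triangle.coyoneda_exact₂ _ hT (x : W ⟶ X) hx
          exact ⟨w, hw.symm⟩
        · rintro ⟨y, rfl⟩
          have h5 : ∀ y : W ⟶ X, (y ≫ act A X r) ≫ g = 0 := fun y => by
            rw [Category.assoc, c12, comp_zero]
          exact h5 y
    · intro W hPW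
      refine wreg_iso A (Iso.refl Y) (neg_shift_iso W).some rs ?_
      obtain ⟨k1, k2⟩ := key _ (hPW.shift (-1))
      exact wreg_of_surj r rs _ k1 k2 (hX _ (hPW.shift (-1)))
    · intro hmem
      obtain ⟨k1, k2⟩ := key Z hZ
      exact hn (mem_of_surj r rs _ k1 (fun x => (k2 x).1) f hmem)

theorem period (m : ℕ) (e : shiftFunctor C (m : ℤ) ≅ 𝟭 C) (X : C) (k : ℤ) :
    Nonempty (X⟦(m : ℤ) * k⟧ ≅ X) := by
  induction k with
  | zero => exact ⟨eqToIso (by simp) ≪≫ (shiftFunctorZero C ℤ).app X⟩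
  | succ i ih =>
    exact ⟨(shiftFunctorAdd' C ((m : ℤ) * i) m _ (by ring)).app X ≪≫ e.app _ ≪≫ ih.some⟩
  | pred i ih =>
    exact ⟨(e.app _).symm ≪≫
      ((shiftFunctorAdd' C ((m : ℤ) * (-i - 1)) m ((m : ℤ) * (-i)) (by ring)).app X).symm
        ≪≫ ih.some⟩

theorem shift_cast (m : ℕ) (e : shiftFunctor C (m : ℤ) ≅ 𝟭 C) (X : C) (j : ℤ) :
    ∃ i : ZMod m, Nonempty (X⟦(ZMod.cast i : ℤ)⟧ ≅ X⟦j⟧) := by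
  refine ⟨(j : ZMod m), ?_⟩
  have h : ((ZMod.cast (j : ZMod m) : ℤ) : ZMod m) = (j : ZMod m) := by simp
  rw [ZMod.intCast_eq_intCast_iff_dvd_sub] at h
  obtain ⟨k, hk⟩ := h
  exact ⟨((shiftFunctorAdd' C ((m : ℤ) * k) (ZMod.cast (j : ZMod m) : ℤ) j
    (by rw [← hk]; ring)).app X ≪≫ (shiftFunctor C _).mapIso (period m e X k).some).symm⟩

end CatLemmas

/-- Let `C` be a `ℤ/m`-graded triangulated category (`1 ≤ m ≤ ∞`; here
`m = 0` encodes `m = ∞`), `R` a commutative ring acting centrally on `C`, `G` an object and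
`M = Hom^•(G, G)`. If `r_1, …, r_n ∈ R` is an `M`-regular sequence and `s = 2^n`, then the
Koszul object `G ⫽ (r_1^s, …, r_n^s)` does not belong to `⟨G⟩_n`. -/
theorem koszulObject_not_mem_angleN
    (A : CentralAction (C := C) R) (m : ℕ)
    (hgr : Nonempty (shiftFunctor C (m : ℤ) ≅ 𝟭 C))
    (G : C) (rs : List R)
    (hreg : RingTheory.Sequence.IsRegular (A.HomBullet m G G) rs)
    (K : C) (hK : A.IsIterKoszulObject G (rs.map fun r => r ^ (2 ^ rs.length)) K) :
    K ∉ angleN {G} rs.length := by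
  classical
  obtain ⟨e⟩ := hgr
  obtain ⟨s, hs⟩ : ∃ s, 2 ^ rs.length = s + 1 :=
    ⟨2 ^ rs.length - 1, (Nat.sub_add_cancel Nat.one_le_two_pow).symm⟩
  rw [hs] at hK
  have hcomp : ∀ i : ZMod m, RingTheory.Sequence.IsWeaklyRegular
      (HomMod A G (G⟦(ZMod.cast i : ℤ)⟧)) rs := by
    intro i
    refine wreg_retract (M := ⨁ i : ZMod m, HomMod A G (G⟦(ZMod.cast i : ℤ)⟧)) rs
      (DirectSum.lof R (ZMod m) (fun i => HomMod A G (G⟦(ZMod.cast i : ℤ)⟧)) i)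
      (DirectSum.component R (ZMod m) (fun i => HomMod A G (G⟦(ZMod.cast i : ℤ)⟧)) i) ?_
      hreg.toIsWeaklyRegular
    exact LinearMap.ext fun x => DirectSum.component.lof_self R
      (M := fun i : ZMod m => HomMod A G (G⟦(ZMod.cast i : ℤ)⟧)) i x
  have hall : ∀ j : ℤ, RingTheory.Sequence.IsWeaklyRegular (HomMod A G (G⟦j⟧)) rs := by
    intro j
    obtain ⟨i, ⟨e'⟩⟩ := shift_cast m e G j
    exact wreg_iso A (Iso.refl _) e' rs (hcomp i)
  have e0 : G⟦(0 : ℤ)⟧ ≅ G := (shiftFunctorZero C ℤ).app G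
  refine Exists.elim (main_ind A G hK 0 G (𝟙 G) ⟨0, ⟨e0.symm⟩⟩ trivial ?_ ?_ ?_) ?_
  rotate_right 1
  · rintro Z' ⟨p, hp, hp0⟩ hmem
    rw [Nat.zero_add, List.length_map] at hp
    exact hp0 (kill_angleN G _ hmem _ p hp)
  · rintro W ⟨j, ⟨e'⟩⟩
    refine wreg_pow s rs ?_
    refine wreg_iso A e'.symm ((shiftFunctorCompIsoId C (-j) j (by simp)).app G) rs ?_
    exact (wreg_shift A _ _ j rs).1 (hall (-j))
  · rintro W ⟨j, ⟨e'⟩⟩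
    exact wreg_pow s rs (wreg_iso A (Iso.refl _) e'.symm rs (hall j))
  · intro hmem
    let one : HomMod A G G := 𝟙 G
    have h1 : one ∈ (Ideal.ofList rs • ⊤ : Submodule R (HomMod A G G)) :=
      Submodule.smul_mono (M := HomMod A G G) (ofList_pow_le s rs) le_rfl hmem
    have h2 : ∀ (Z : C) (g : HomMod A G Z),
        g ∈ (Ideal.ofList rs • ⊤ : Submodule R (HomMod A G Z)) := by
      intro Z g
      have h3 := Submodule.mem_map_of_mem (f := postL A (g : G ⟶ Z) G) h1
      rw [Submodule.map_smul''] at h3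
      have h4 : postL A (g : G ⟶ Z) G one = g := Category.id_comp (g : G ⟶ Z)
      rw [h4] at h3
      exact Submodule.smul_mono le_rfl le_top h3
    have h5 : ∀ x : (⨁ i : ZMod m, HomMod A G (G⟦(ZMod.cast i : ℤ)⟧)),
        x ∈ (Ideal.ofList rs • ⊤ :
          Submodule R (⨁ i : ZMod m, HomMod A G (G⟦(ZMod.cast i : ℤ)⟧))) := by
      intro x
      induction x using DirectSum.induction_on with
      | zero => exact Submodule.zero_mem _
      | of i g =>
        have h3 := Submodule.mem_map_of_mem
          (f := DirectSum.lof R (ZMod m) (fun i => HomMod A G (G⟦(ZMod.cast i : ℤ)⟧)) i) (h2 _ g)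
        rw [Submodule.map_smul''] at h3
        exact Submodule.smul_mono le_rfl le_top h3
      | add x y hx hy => exact Submodule.add_mem _ hx hy
    exact hreg.top_ne_smul (Submodule.eq_top_iff'.2 h5).symm

end RouquierDim
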